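/- Let G = SO₃(ℂ) act on V = R₄, its 5-dimensional irreducible representation. Then the Lie algebra of G' equals the image of the Lie algebra so₃ (equivalently sl₂) acting on V; in particular the Lie algebra of G' is semisimple with trivial center. -/

import Mathlib

noncomputable section

/-- A function `V → ℂ` is a polynomial function if it lies in the subalgebra of
functions generated by the linear functionals, i.e. it is given by a polynomial
in linear coordinates. -/
def IsPolyFun {V : Type*} [AddCommGroup V] [Module ℂ V] (f : V → ℂ) : Prop :=
  f ∈ Algebra.adjoin ℂ (Set.range fun l : V →ₗ[ℂ] ℂ => (l : V → ℂ))

/-- Given a subgroup `G` of `GL(V)`, the group `G'` of all linear automorphisms of `V`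
preserving every `G`-invariant polynomial function on `V`. -/
def primeGroup {V : Type*} [AddCommGroup V] [Module ℂ V]
    (G : Subgroup (V ≃ₗ[ℂ] V)) : Subgroup (V ≃ₗ[ℂ] V) where
  carrier := {φ | ∀ f : V → ℂ, IsPolyFun f →
      (∀ g ∈ G, ∀ v : V, f (g v) = f v) → ∀ v : V, f (φ v) = f v}
  one_mem' := by intro f _ _ v; rfl
  mul_mem' := by
    intro a b ha hb f hf hinv v
    have h2 : f (a (b v)) = f (b v) := ha f hf hinv (b v)
    exact h2.trans (hb f hf hinv v)
  inv_mem' := by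
    intro a ha f hf hinv v
    have h := ha f hf hinv (a⁻¹ v)
    have : a (a⁻¹ v) = v := a.apply_symm_apply v
    rw [this] at h
    exact h.symm

/-- The algebraic exponential of an endomorphism of a finite-dimensional space
(intended for nilpotent endomorphisms, where the series is a finite sum). -/
def endExp {g : Type*} [AddCommGroup g] [Module ℂ g] [FiniteDimensional ℂ g]
    (A : Module.End ℂ g) : Module.End ℂ g :=
  ∑ k ∈ Finset.range (Module.finrank ℂ g + 1), (k.factorial : ℂ)⁻¹ • A ^ k

/-- The adjoint group `G = Aut(g)⁰` of a semisimple Lie algebra `g`: the subgroup of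
`GL(g)` generated by the exponentials of nilpotent inner derivations `ad x`. -/
def adjointGroup (g : Type*) [LieRing g] [LieAlgebra ℂ g] [FiniteDimensional ℂ g] :
    Subgroup (g ≃ₗ[ℂ] g) :=
  Subgroup.closure {u : g ≃ₗ[ℂ] g | ∃ x : g,
    IsNilpotent (LieAlgebra.ad ℂ g x) ∧ (u : g →ₗ[ℂ] g) = endExp (LieAlgebra.ad ℂ g x)}

/-- The subgroup of `GL(g)` fixing a subalgebra `t` pointwise. -/
def pointwiseStab {g : Type*} [LieRing g] [LieAlgebra ℂ g]
    (t : LieSubalgebra ℂ g) : Subgroup (g ≃ₗ[ℂ] g) where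
  carrier := {u | ∀ x ∈ t, u x = x}
  one_mem' := by intro x _; rfl
  mul_mem' := by
    intro a b ha hb x hx
    have : a (b x) = a x := by rw [hb x hx]
    exact this.trans (ha x hx)
  inv_mem' := by
    intro a ha x hx
    conv_lhs => rw [← ha x hx]
    exact a.symm_apply_apply x

/-- The maximal torus of the adjoint group corresponding to a Cartan subalgebra `t`:
the elements of the adjoint group acting trivially on `t`. -/
def maximalTorus (g : Type*) [LieRing g] [LieAlgebra ℂ g] [FiniteDimensional ℂ g]
    (t : LieSubalgebra ℂ g) : Subgroup (g ≃ₗ[ℂ] g) :=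
  adjointGroup g ⊓ pointwiseStab t

namespace Stmt19

/-- A representation of `SL₂(ℂ)` is polynomial (algebraic) if all its matrix
coefficients are polynomial functions of the matrix entries. -/
def IsPolynomialRep {W : Type} [AddCommGroup W] [Module ℂ W]
    (ρ : Matrix.SpecialLinearGroup (Fin 2) ℂ →* (W ≃ₗ[ℂ] W)) : Prop :=
  ∀ (l : W →ₗ[ℂ] ℂ) (w : W), ∃ p : MvPolynomial (Fin 2 × Fin 2) ℂ,
    ∀ g : Matrix.SpecialLinearGroup (Fin 2) ℂ,
      l (ρ g w) = MvPolynomial.eval (fun ij => (g : Matrix (Fin 2) (Fin 2) ℂ) ij.1 ij.2) p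

/-- Irreducibility of a representation. -/
def IsIrreducibleRep {W : Type} [AddCommGroup W] [Module ℂ W]
    (ρ : Matrix.SpecialLinearGroup (Fin 2) ℂ →* (W ≃ₗ[ℂ] W)) : Prop :=
  ∀ U : Submodule ℂ W, (∀ g : Matrix.SpecialLinearGroup (Fin 2) ℂ, ∀ w ∈ U, ρ g w ∈ U) →
    U = ⊥ ∨ U = ⊤

/-- The Lie algebra of a (closed) subgroup `H ⊆ GL(ℂ⁵)`: all endomorphisms arising as
derivatives at `0` of differentiable curves through the identity inside `H`. -/
def lieAlgebraOf (H : Subgroup ((Fin 5 → ℂ) ≃ₗ[ℂ] (Fin 5 → ℂ))) :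
    Set (Module.End ℂ (Fin 5 → ℂ)) :=
  {A | ∃ c : ℂ → ((Fin 5 → ℂ) ≃ₗ[ℂ] (Fin 5 → ℂ)), c 0 = 1 ∧ (∀ s : ℂ, c s ∈ H) ∧
    ∀ v : Fin 5 → ℂ, HasDerivAt (fun s : ℂ => c s v) (A v) 0}

/-!
Differentiating `ρ` gives an `sl₂`-triple `H, E, F` in `gl(V)` whose span lies in the Lie algebra of
`G`, hence in that of `G'`. Irreducibility makes `V` the space of binary quartics, whose classical
invariants `I` (quadratic) and `J` (cubic) are constant on `G`-orbits, so the Lie algebra of `G'`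
lies in the Lie algebra `N` of the endomorphisms annihilating `I` and `J`.

It remains to see that `N` is spanned by `H, E, F`. An endomorphism commuting with `E` is determined
by its value on the lowest weight vector, and `I` and `J` leave only the multiples of `E` in `N`.
Let `x ∈ N`. Invariance of the trace form, together with `tr (F E) ≠ 0`, shows that `(ad E)³ x` is
never a nonzero multiple of `E`. As `ad E` is nilpotent, it follows that `(ad E)³ x = 0`, and
subtracting suitable multiples of `F`, `H` and `E` from `x` leaves zero.
-/

section Sl2Triple

variable {K L : Type*} [Field K] [LieRing L] [LieAlgebra K L] {h e f : L}

variable (K) in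
theorem lie_e_h (t : IsSl2Triple h e f) : ⁅e, h⁆ = -((2 : K) • e) := by
  rw [← lie_skew, t.lie_h_e_smul K]

theorem lie_lie_lie_eq_zero_of_eq_smul (t : IsSl2Triple h e f) {Φ : LinearMap.BilinForm K L}
    (hΦ : Φ.lieInvariant L) (hfe : Φ f e ≠ 0) {x : L} {c : K}
    (hx : ⁅e, ⁅e, ⁅e, x⁆⁆⁆ = c • e) : ⁅e, ⁅e, ⁅e, x⁆⁆⁆ = 0 := by
  have hh (y : L) : Φ f ⁅e, y⁆ = -Φ h y := by
    have := hΦ e f y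
    rw [t.lie_e_f] at this
    rw [this, neg_neg]
  have he (y : L) : Φ h ⁅e, y⁆ = 2 * Φ e y := by
    have := hΦ e h y
    rw [lie_e_h K t, map_neg, LinearMap.neg_apply, map_smul,
      LinearMap.smul_apply, smul_eq_mul] at this
    linear_combination this
  have hz : Φ e ⁅e, x⁆ = 0 := by
    have := hΦ e e x
    rw [lie_self, map_zero, LinearMap.zero_apply] at this
    linear_combination this
  have hc : c * Φ f e = 0 := by
    rw [← smul_eq_mul, ← map_smul, ← hx, hh, he, hz, mul_zero, neg_zero]
  rw [hx, (mul_eq_zero.mp hc).resolve_right hfe, zero_smul]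

theorem lie_lie_lie_eq_zero_of_mem (t : IsSl2Triple h e f) {Φ : LinearMap.BilinForm K L}
    (hΦ : Φ.lieInvariant L) (hfe : Φ f e ≠ 0) (he : IsNilpotent (LieAlgebra.ad K L e))
    {N : Submodule K L} (hN : ∀ x ∈ N, ⁅e, x⁆ ∈ N)
    (hcent : ∀ x ∈ N, ⁅e, x⁆ = 0 → x ∈ Submodule.span K {e}) {x : L} (hx : x ∈ N) :
    ⁅e, ⁅e, ⁅e, x⁆⁆⁆ = 0 := by
  obtain ⟨k, hk⟩ := he
  suffices ∀ j x, x ∈ N → ((LieAlgebra.ad K L e) ^ j) x = 0 → ⁅e, ⁅e, ⁅e, x⁆⁆⁆ = 0 from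
    this k x hx (by rw [hk, LinearMap.zero_apply])
  intro j
  induction j with
  | zero =>
    intro x _ hx
    rw [pow_zero, Module.End.one_apply] at hx
    simp only [hx, lie_zero]
  | succ j ih =>
    intro x hx hj
    have h₄ : ⁅e, ⁅e, ⁅e, ⁅e, x⁆⁆⁆⁆ = 0 := ih _ (hN x hx) (by
      rwa [pow_succ, Module.End.mul_apply, LieAlgebra.ad_apply] at hj)
    obtain ⟨c, hc⟩ := Submodule.mem_span_singleton.mp
      (hcent _ (hN _ (hN _ (hN x hx))) h₄)
    exact lie_lie_lie_eq_zero_of_eq_smul t hΦ hfe hc.symm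

theorem lie_lie_smul_add_smul_add_smul (t : IsSl2Triple h e f) (a b c : K) :
    ⁅e, ⁅e, a • h + b • e + c • f⁆⁆ = (-2 * c) • e := by
  simp only [lie_add, lie_smul, lie_self, t.lie_e_f, lie_e_h K t, lie_neg, smul_zero, add_zero]
  module

variable [CharZero K]

theorem lie_lie_add_smul (t : IsSl2Triple h e f) {x : L} {a : K} (hx : ⁅e, ⁅e, x⁆⁆ = a • e) :
    ⁅e, ⁅e, x + (a / 2) • f⁆⁆ = 0 := by
  rw [lie_add, lie_add, hx, lie_smul, lie_smul, t.lie_e_f, lie_e_h K t]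
  module

theorem lie_add_smul (t : IsSl2Triple h e f) {x : L} {a : K} (hx : ⁅e, x⁆ = a • e) :
    ⁅e, x + (a / 2) • h⁆ = 0 := by
  rw [lie_add, hx, lie_smul, lie_e_h K t]
  module

theorem le_span_of_centralizer_le (t : IsSl2Triple h e f) {Φ : LinearMap.BilinForm K L}
    (hΦ : Φ.lieInvariant L) (hfe : Φ f e ≠ 0) (he : IsNilpotent (LieAlgebra.ad K L e))
    {N : Submodule K L} (hhN : h ∈ N) (hfN : f ∈ N) (hN : ∀ x ∈ N, ⁅e, x⁆ ∈ N)
    (hcent : ∀ x ∈ N, ⁅e, x⁆ = 0 → x ∈ Submodule.span K {e}) :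
    N ≤ Submodule.span K {h, e, f} := by
  intro x hx
  obtain ⟨a, ha⟩ := Submodule.mem_span_singleton.mp (hcent _ (hN _ (hN x hx))
    (lie_lie_lie_eq_zero_of_mem t hΦ hfe he hN hcent hx))
  have hy : x + (a / 2) • f ∈ N := N.add_mem hx (N.smul_mem _ hfN)
  obtain ⟨b, hb⟩ := Submodule.mem_span_singleton.mp (hcent _ (hN _ hy)
    (lie_lie_add_smul t ha.symm))
  obtain ⟨c, hc⟩ := Submodule.mem_span_singleton.mp
    (hcent _ (N.add_mem hy (N.smul_mem _ hhN)) (lie_add_smul t hb.symm))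
  refine Submodule.mem_span_triple.mpr ⟨-(b / 2), c, -(a / 2), ?_⟩
  rw [hc]
  module

theorem e_notMem_of_isAbelian (t : IsSl2Triple h e f) {J : Submodule K L}
    (hJf : ∀ x ∈ J, ⁅f, x⁆ ∈ J) (hJ : ∀ x ∈ J, ∀ y ∈ J, ⁅x, y⁆ = 0) : e ∉ J := by
  intro he
  have hh : h ∈ J := by
    rw [← t.lie_e_f, ← lie_skew]
    exact J.neg_mem (hJf e he)
  have h2 : (2 : K) • e = 0 := by rw [← t.lie_h_e_smul K, hJ h hh e he]
  have he0 : e = 0 := (smul_eq_zero.mp h2).resolve_left two_ne_zero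
  exact t.h_ne_zero (by rw [← t.lie_e_f, he0, zero_lie])

theorem eq_bot_of_isAbelian_of_le_span (t : IsSl2Triple h e f) {J : Submodule K L}
    (hle : J ≤ Submodule.span K {h, e, f}) (hJe : ∀ x ∈ J, ⁅e, x⁆ ∈ J)
    (hJf : ∀ x ∈ J, ⁅f, x⁆ ∈ J) (hJ : ∀ x ∈ J, ∀ y ∈ J, ⁅x, y⁆ = 0) : J = ⊥ := by
  have he : e ∉ J := e_notMem_of_isAbelian t hJf hJ
  have hf : f ∉ J := e_notMem_of_isAbelian t.symm hJe hJ
  have eq_zero_of_smul {a : K} {y : L} (hy : y ∉ J) (ha : a • y ∈ J) : a = 0 := by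
    by_contra ha0
    exact hy ((J.smul_mem_iff ha0).mp ha)
  refine (Submodule.eq_bot_iff J).mpr fun x hx ↦ ?_
  obtain ⟨a, b, c, rfl⟩ := Submodule.mem_span_triple.mp (hle hx)
  have hc : -2 * c = 0 :=
    eq_zero_of_smul he (lie_lie_smul_add_smul_add_smul t a b c ▸ hJe _ (hJe _ hx))
  have hb : -2 * b = 0 := by
    refine eq_zero_of_smul hf ?_
    have := hJf _ (hJf _ hx)
    rwa [show a • h + b • e + c • f = (-a) • (-h) + c • f + b • e by module,
      lie_lie_smul_add_smul_add_smul t.symm] at this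
  obtain rfl : c = 0 := by simpa using hc
  obtain rfl : b = 0 := by simpa using hb
  have ha : -(a * 2) = 0 := by
    refine eq_zero_of_smul he ?_
    have := hJe _ hx
    rwa [zero_smul, zero_smul, add_zero, add_zero, lie_smul, lie_e_h K t,
      smul_neg, smul_smul, ← neg_smul] at this
  obtain rfl : a = 0 := by simpa using ha
  simp

theorem eq_zero_of_lie_eq_zero_of_mem_span (t : IsSl2Triple h e f) {x : L}
    (hx : x ∈ Submodule.span K {h, e, f}) (hex : ⁅e, x⁆ = 0) (hfx : ⁅f, x⁆ = 0) : x = 0 := by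
  refine Submodule.span_singleton_eq_bot.mp (eq_bot_of_isAbelian_of_le_span t (J := K ∙ x)
    ((Submodule.span_singleton_le_iff_mem ..).mpr hx) ?_ ?_ ?_)
  all_goals simp [Submodule.mem_span_singleton, hex, hfx]

end Sl2Triple

section WeightBasis

attribute [local instance] LieRing.ofAssociativeRing

variable {K V : Type*} [Field K] [AddCommGroup V] [Module K V] {H E F : Module.End K V}

/-- The divided power `Fᵏ m / k!`, the normalisation of the weight vectors of a module generated by
a highest weight vector `m` which makes the matrices of the `sl₂`-triple integral. -/
def dividedPower (F : Module.End K V) (m : V) (k : ℕ) : V :=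
  (k.factorial : K)⁻¹ • (F ^ k) m

/-- A basis on which `E` and `F` act by the standard matrices of the irreducible `sl₂`-module of
dimension `n + 1`, that is, as `x ∂/∂y` and `y ∂/∂x` act on the basis `(n choose k) xⁿ⁻ᵏ yᵏ` of the
binary forms of degree `n`. -/
structure IsWeightBasis {n : ℕ} (E F : Module.End K V) (b : Module.Basis (Fin (n + 1)) K V) :
    Prop where
  E_zero : E (b 0) = 0
  E_succ (k : Fin n) : E (b k.succ) = ((n : K) - (k : ℕ)) • b k.castSucc
  F_castSucc (k : Fin n) : F (b k.castSucc) = ((k : ℕ) + 1 : K) • b k.succ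
  F_last : F (b (Fin.last n)) = 0

section DividedPower

variable [CharZero K]

theorem apply_dividedPower (F : Module.End K V) (m : V) (k : ℕ) :
    F (dividedPower F m k) = ((k : K) + 1) • dividedPower F m (k + 1) := by
  have hk : (k : K) + 1 ≠ 0 := k.cast_add_one_ne_zero
  rw [dividedPower, dividedPower, map_smul, pow_succ', Module.End.mul_apply, smul_smul,
    Nat.factorial_succ, Nat.cast_mul, Nat.cast_succ, mul_inv, mul_inv_cancel_left₀ hk]

variable {t : IsSl2Triple H E F} {m : V}

theorem apply_dividedPower_succ {μ : K} (P : t.HasPrimitiveVectorWith m μ) (k : ℕ) :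
    E (dividedPower F m (k + 1)) = (μ - k) • dividedPower F m k := by
  have hk : (k : K) + 1 ≠ 0 := k.cast_add_one_ne_zero
  have hE : E ((F ^ (k + 1)) m) = ((k + 1) * (μ - k)) • (F ^ k) m := P.lie_e_pow_succ_toEnd_f k
  rw [dividedPower, dividedPower, map_smul, hE, smul_smul, smul_smul, Nat.factorial_succ,
    Nat.cast_mul, Nat.cast_succ]
  congr 1
  field_simp

variable {n : ℕ}

theorem hasEigenvector_dividedPower (P : t.HasPrimitiveVectorWith m (n : K)) {k : ℕ}
    (hk : k ≤ n) : H.HasEigenvector ((n : K) - 2 * k) (dividedPower F m k) := by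
  have hH : H ((F ^ k) m) = ((n : K) - 2 * k) • (F ^ k) m := P.lie_h_pow_toEnd_f k
  refine Module.End.hasEigenvector_iff.mpr ⟨Module.End.mem_eigenspace_iff.mpr ?_, ?_⟩
  · rw [dividedPower, map_smul, hH, smul_comm]
  · exact smul_ne_zero (inv_ne_zero (Nat.cast_ne_zero.mpr k.factorial_ne_zero))
      (P.pow_toEnd_f_ne_zero_of_eq_nat rfl hk)

theorem linearIndependent_dividedPower (P : t.HasPrimitiveVectorWith m (n : K)) :
    LinearIndependent K fun k : Fin (n + 1) ↦ dividedPower F m k :=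
  H.eigenvectors_linearIndependent' (fun k : Fin (n + 1) ↦ (n : K) - 2 * (k : ℕ))
    (fun i j hij ↦ by ext; simpa using hij) _
    fun k ↦ hasEigenvector_dividedPower P (Nat.lt_succ_iff.mp k.2)

variable [FiniteDimensional K V]

theorem dividedPower_succ_eq_zero (P : t.HasPrimitiveVectorWith m (n : K)) :
    dividedPower F m (n + 1) = 0 := by
  have : (F ^ (n + 1)) m = 0 := P.pow_toEnd_f_eq_zero_of_eq_nat rfl
  rw [dividedPower, this, smul_zero]

theorem span_dividedPower_eq_top (P : t.HasPrimitiveVectorWith m (n : K))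
    (hirr : ∀ W : Submodule K V, W ≤ W.comap E → W ≤ W.comap F → W = ⊥ ∨ W = ⊤) :
    Submodule.span K (Set.range fun k : Fin (n + 1) ↦ dividedPower F m k) = ⊤ := by
  set W := Submodule.span K (Set.range fun k : Fin (n + 1) ↦ dividedPower F m k)
  have hW {k : ℕ} (hk : k ≤ n) : dividedPower F m k ∈ W :=
    Submodule.subset_span ⟨⟨k, Nat.lt_succ_iff.mpr hk⟩, rfl⟩
  have hm : dividedPower F m 0 = m := by simp [dividedPower]
  refine (hirr W ?_ ?_).resolve_left fun h ↦ P.ne_zero ?_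
  · refine Submodule.span_le.mpr ?_
    rintro _ ⟨⟨_ | k, hk⟩, rfl⟩
    · have hE : E m = 0 := P.lie_e
      simp [hm, hE]
    · simpa only [SetLike.mem_coe, Submodule.mem_comap, apply_dividedPower_succ P] using
        W.smul_mem _ (hW (Nat.le_of_lt (Nat.succ_lt_succ_iff.mp hk)))
  · refine Submodule.span_le.mpr ?_
    rintro _ ⟨⟨k, hk⟩, rfl⟩
    rw [SetLike.mem_coe, Submodule.mem_comap, apply_dividedPower]
    obtain rfl | hkn := eq_or_ne k n
    · simp [dividedPower_succ_eq_zero P]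
    · exact W.smul_mem _ (hW (by lia : k + 1 ≤ n))
  · rw [← hm, ← Submodule.mem_bot K, ← h]
    exact hW n.zero_le

theorem exists_isWeightBasis [IsAlgClosed K] (hV : Module.finrank K V = n + 1)
    (t : IsSl2Triple H E F)
    (hirr : ∀ W : Submodule K V, W ≤ W.comap E → W ≤ W.comap F → W = ⊥ ∨ W = ⊤) :
    ∃ b : Module.Basis (Fin (n + 1)) K V, IsWeightBasis E F b := by
  have : Nontrivial V := Module.nontrivial_of_finrank_pos (R := K) (by lia)
  obtain ⟨μ, m, -, P⟩ := IsSl2Triple.exists_hasPrimitiveVectorWith (R := K) (M := V) t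
  obtain ⟨d, rfl⟩ := P.exists_nat
  have hli := linearIndependent_dividedPower P
  let b := Module.Basis.mk hli (span_dividedPower_eq_top P hirr).ge
  obtain rfl : d = n := by
    have := Module.finrank_eq_card_basis b
    rw [Fintype.card_fin] at this
    lia
  have hb (k : Fin (d + 1)) : b k = dividedPower F m k := Module.Basis.mk_apply ..
  refine ⟨b, ?_, fun k ↦ ?_, fun k ↦ ?_, ?_⟩
  · have hE : E m = 0 := P.lie_e
    simp [hb, dividedPower, hE]
  · rw [hb, hb, Fin.val_succ, apply_dividedPower_succ P, Fin.val_castSucc]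
  · rw [hb, hb, Fin.val_castSucc, apply_dividedPower, Fin.val_succ]
  · rw [hb, Fin.val_last, apply_dividedPower, dividedPower_succ_eq_zero P, smul_zero]

end DividedPower

namespace IsWeightBasis

variable {n : ℕ} {b : Module.Basis (Fin (n + 1)) K V}

theorem isNilpotent_E (hb : IsWeightBasis E F b) : IsNilpotent E := by
  have hpow (k : ℕ) (hk : k < n + 1) : (E ^ (k + 1)) (b ⟨k, hk⟩) = 0 := by
    induction k with
    | zero => simpa using hb.E_zero
    | succ k ih =>
      rw [pow_succ, Module.End.mul_apply]
      have := hb.E_succ ⟨k, by lia⟩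
      rw [Fin.succ_mk] at this
      rw [this, map_smul, Fin.castSucc_mk, ih, smul_zero]
  refine ⟨n + 1, b.ext fun k ↦ ?_⟩
  rw [LinearMap.zero_apply]
  exact Module.End.pow_map_zero_of_le k.2 (hpow k k.2)

variable [CharZero K]

theorem eq_zero_of_commute (hb : IsWeightBasis E F b) {A : Module.End K V}
    (hA : Commute A E) (hlast : A (b (Fin.last n)) = 0) : A = 0 := by
  refine b.ext fun k ↦ ?_
  induction k using Fin.reverseInduction with
  | last => exact hlast
  | cast k ih =>
    have hk : (n : K) - (k : ℕ) ≠ 0 := sub_ne_zero.mpr (Nat.cast_injective.ne (by lia))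
    have h : ((n : K) - (k : ℕ)) • A (b k.castSucc) = 0 := by
      rw [← map_smul, ← hb.E_succ, ← Module.End.mul_apply, hA.eq, Module.End.mul_apply, ih,
        LinearMap.zero_apply, map_zero]
    exact (smul_eq_zero.mp h).resolve_left hk

theorem trace_F_mul_E_ne_zero [NeZero n] (hb : IsWeightBasis E F b) :
    LinearMap.trace K V (F * E) ≠ 0 := by
  have hdiag (k : Fin n) : b.repr ((F * E) (b k.succ)) k.succ = ((n - k) * (k + 1) : ℕ) := by
    rw [Module.End.mul_apply, hb.E_succ, map_smul, hb.F_castSucc]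
    simp only [map_smul, Module.Basis.repr_self, Finsupp.smul_apply, Finsupp.single_eq_same,
      smul_eq_mul, mul_one]
    rw [Nat.cast_mul, Nat.cast_sub k.2.le, Nat.cast_succ]
  have h0 : b.repr ((F * E) (b 0)) 0 = 0 := by simp [hb.E_zero]
  rw [LinearMap.trace_eq_matrix_trace K b, Matrix.trace, Fin.sum_univ_succ]
  simp only [Matrix.diag_apply, LinearMap.toMatrix_apply, h0, hdiag, zero_add]
  rw [← Nat.cast_sum, Nat.cast_ne_zero, ← Nat.pos_iff_ne_zero]
  exact Finset.sum_pos (fun k _ ↦ Nat.mul_pos (Nat.sub_pos_of_lt k.2) k.val.succ_pos)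
    Finset.univ_nonempty

end IsWeightBasis

end WeightBasis

section LinearVectorField

open MvPolynomial

variable {ι R V : Type*} [Fintype ι] [DecidableEq ι] [CommRing R] [AddCommGroup V] [Module R V]
  (b : Module.Basis ι R V)

theorem toMvPolynomial_eq_sum (A : Module.End R V) (i : ι) :
    A.toMvPolynomial b b i = ∑ j, b.repr (A (b j)) i • X j := by
  simp only [LinearMap.toMvPolynomial, Matrix.toMvPolynomial, LinearMap.toMatrix_apply,
    ← C_mul_X_eq_monomial, smul_eq_C_mul]

/-- The derivative along the linear vector field `v ↦ A v`, as a derivation of the polynomials in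
the coordinates of the basis `b`: the action of the Lie algebra `gl(V)` on polynomial functions. -/
def linearVectorField :
    Module.End R V →ₗ[R] Derivation R (MvPolynomial ι R) (MvPolynomial ι R) where
  toFun A := mkDerivation R (A.toMvPolynomial b b)
  map_add' A B := by
    ext1 i
    simp only [Derivation.add_apply, mkDerivation_X, LinearMap.toMvPolynomial_add, Pi.add_apply]
  map_smul' c A := by
    ext1 i
    simp only [Derivation.smul_apply, mkDerivation_X, toMvPolynomial_eq_sum, LinearMap.smul_apply,
      map_smul, Finsupp.smul_apply, smul_assoc, Finset.smul_sum, RingHom.id_apply]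

theorem linearVectorField_X (A : Module.End R V) (i : ι) :
    linearVectorField b A (X i) = A.toMvPolynomial b b i :=
  mkDerivation_X ..

theorem eval_linearVectorField_X (A : Module.End R V) (i : ι) (v : V) :
    eval (b.repr v) (linearVectorField b A (X i)) = b.repr (A v) i := by
  rw [linearVectorField_X, LinearMap.toMvPolynomial_eval_eq_apply, LinearEquiv.symm_apply_apply]

theorem linearVectorField_toMvPolynomial (A B : Module.End R V) (i : ι) :
    linearVectorField b A (B.toMvPolynomial b b i) = (B * A).toMvPolynomial b b i := by
  rw [Module.End.mul_eq_comp, LinearMap.toMvPolynomial_comp b b b, toMvPolynomial_eq_sum b B]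
  simp only [map_sum, Derivation.map_smul, map_smul, linearVectorField_X, bind₁_X_right]

theorem hasDerivAt_eval_repr {𝕜 V : Type*} [NontriviallyNormedField 𝕜] [CompleteSpace 𝕜]
    [NormedAddCommGroup V] [NormedSpace 𝕜 V] (b : Module.Basis ι 𝕜 V) {A : Module.End 𝕜 V}
    {u : 𝕜 → V} {t : 𝕜} (hu : HasDerivAt u (A (u t)) t) (p : MvPolynomial ι 𝕜) :
    HasDerivAt (fun s ↦ eval (b.repr (u s)) p) (eval (b.repr (u t)) (linearVectorField b A p))
      t := by
  have := b.finiteDimensional_of_finite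
  induction p using MvPolynomial.induction_on with
  | C a => simpa using hasDerivAt_const t a
  | add p q hp hq => simpa only [map_add] using! hp.add hq
  | mul_X p i hp =>
    have hX : HasDerivAt (fun s ↦ b.repr (u s) i) (b.repr (A (u t)) i) t :=
      ((b.coord i).toContinuousLinearMap.hasFDerivAt.comp_hasDerivAt t hu)
    simp only [map_mul, eval_X, Derivation.leibniz, map_add, smul_eq_mul,
      eval_linearVectorField_X]
    rw [add_comm, mul_comm (b.repr (u t) i)]
    exact hp.mul hX

theorem isPolyFun_eval_repr {σ V : Type*} [AddCommGroup V] [Module ℂ V]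
    (b : Module.Basis σ ℂ V) (p : MvPolynomial σ ℂ) : IsPolyFun fun v : V ↦ eval (b.repr v) p := by
  unfold IsPolyFun
  induction p using MvPolynomial.induction_on with
  | C a => simpa only [eval_C] using! Subalgebra.algebraMap_mem _ a
  | add p q hp hq => simpa only [map_add] using! add_mem hp hq
  | mul_X p i hp =>
    simp only [map_mul, eval_X]
    exact mul_mem hp (Algebra.subset_adjoin ⟨b.coord i, rfl⟩)

section PolyStabilizer

attribute [local instance] LieRing.ofAssociativeRing

theorem linearVectorField_lie (A B : Module.End R V) :
    linearVectorField b ⁅A, B⁆ = ⁅linearVectorField b B, linearVectorField b A⁆ := by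
  ext1 i
  rw [Derivation.commutator_apply, Ring.lie_def, map_sub, Derivation.sub_apply]
  simp only [linearVectorField_X, linearVectorField_toMvPolynomial]

/-- The Lie algebra of the endomorphisms of `V` which, acting as linear vector fields, annihilate
the polynomials in `S`. -/
def polyStabilizer (S : Set (MvPolynomial ι R)) : LieSubalgebra R (Module.End R V) where
  carrier := {A | ∀ p ∈ S, linearVectorField b A p = 0}
  zero_mem' p _ := by rw [map_zero, Derivation.zero_apply]
  add_mem' hA hB p hp := by rw [map_add, Derivation.add_apply, hA p hp, hB p hp, add_zero]
  smul_mem' c A hA p hp := by rw [map_smul, Derivation.smul_apply, hA p hp, smul_zero]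
  lie_mem' {A B} hA hB p hp := by
    rw [linearVectorField_lie, Derivation.commutator_apply, hA p hp, hB p hp, map_zero, map_zero,
      sub_zero]

theorem mem_polyStabilizer {S : Set (MvPolynomial ι R)} {A : Module.End R V} :
    A ∈ polyStabilizer b S ↔ ∀ p ∈ S, linearVectorField b A p = 0 :=
  Iff.rfl

theorem lieAlgebraOf_primeGroup_subset {G : Subgroup ((Fin 5 → ℂ) ≃ₗ[ℂ] (Fin 5 → ℂ))}
    (b : Module.Basis ι ℂ (Fin 5 → ℂ)) {S : Set (MvPolynomial ι ℂ)}
    (hS : ∀ p ∈ S, ∀ g ∈ G, ∀ v, eval (b.repr (g v)) p = eval (b.repr v) p) :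
    lieAlgebraOf (primeGroup G) ⊆ (polyStabilizer b S : Set (Module.End ℂ (Fin 5 → ℂ))) := by
  rintro A ⟨c, hc0, hc, hA⟩
  refine (mem_polyStabilizer b).mpr fun p hp ↦ MvPolynomial.funext fun x ↦ ?_
  obtain ⟨v, rfl⟩ := b.equivFun.surjective x
  have hderiv := hasDerivAt_eval_repr b (u := fun s ↦ c s v) (A := A) (t := 0)
    (by rw [hc0]; exact hA v) p
  have hconst : (fun s ↦ eval (b.repr (c s v)) p) = fun _ ↦ eval (b.repr v) p :=
    _root_.funext fun s ↦ hc s _ (isPolyFun_eval_repr b p) (hS p hp) v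
  rw [hconst, hc0] at hderiv
  rw [map_zero]
  exact hderiv.unique (hasDerivAt_const ..)

end PolyStabilizer

end LinearVectorField

section BinaryQuartic

open MvPolynomial

attribute [local instance] LieRing.ofAssociativeRing

variable {K V : Type*} [Field K] [AddCommGroup V] [Module K V] {H E F A : Module.End K V}

namespace IsWeightBasis

variable {n : ℕ} {b : Module.Basis (Fin (n + 1)) K V}

theorem linearVectorField_E_X_castSucc (hb : IsWeightBasis E F b) (k : Fin n) :
    linearVectorField b E (X k.castSucc) =
      ((n : ℕ) - (k : ℕ) : MvPolynomial (Fin (n + 1)) K) * X k.succ := by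
  rw [linearVectorField_X, toMvPolynomial_eq_sum, Fin.sum_univ_succ, hb.E_zero]
  simp only [hb.E_succ, map_smul, Module.Basis.repr_self, Finsupp.smul_apply]
  rw [Finset.sum_eq_single k]
  · simp [smul_eq_C_mul]
  · intro j _ hj
    simp [hj]
  · simp

theorem linearVectorField_E_X_last (hb : IsWeightBasis E F b) :
    linearVectorField b E (X (Fin.last n)) = 0 := by
  rw [linearVectorField_X, toMvPolynomial_eq_sum, Fin.sum_univ_succ, hb.E_zero]
  simp [hb.E_succ, Fin.castSucc_ne_last]

theorem linearVectorField_F_X_zero (hb : IsWeightBasis E F b) :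
    linearVectorField b F (X 0) = 0 := by
  rw [linearVectorField_X, toMvPolynomial_eq_sum, Fin.sum_univ_castSucc, hb.F_last]
  simp [hb.F_castSucc]

theorem linearVectorField_F_X_succ (hb : IsWeightBasis E F b) (k : Fin n) :
    linearVectorField b F (X k.succ) =
      ((k : ℕ) + 1 : MvPolynomial (Fin (n + 1)) K) * X k.castSucc := by
  rw [linearVectorField_X, toMvPolynomial_eq_sum, Fin.sum_univ_castSucc, hb.F_last]
  simp only [hb.F_castSucc, map_smul, Module.Basis.repr_self, Finsupp.smul_apply]
  rw [Finset.sum_eq_single k]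
  · simp [smul_eq_C_mul]
  · intro j _ hj
    simp [hj]
  · simp

theorem repr_E_castSucc (hb : IsWeightBasis E F b) (v : V) (k : Fin n) :
    b.repr (E v) k.castSucc = ((n : K) - (k : ℕ)) * b.repr v k.succ := by
  have := congr_arg (eval (b.repr v)) (hb.linearVectorField_E_X_castSucc k)
  rwa [eval_linearVectorField_X, map_mul, map_sub, map_natCast, map_natCast, eval_X] at this

theorem repr_apply_castSucc_of_commute (hb : IsWeightBasis E F b) (hAE : Commute A E)
    (j k : Fin n) : ((n : K) - (j : ℕ)) * b.repr (A (b j.castSucc)) k.castSucc =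
      ((n : K) - (k : ℕ)) * b.repr (A (b j.succ)) k.succ := by
  rw [← hb.repr_E_castSucc, ← smul_eq_mul, ← Finsupp.smul_apply, ← map_smul, ← map_smul,
    ← hb.E_succ]
  exact congr_arg (fun B : Module.End K V ↦ b.repr (B (b j.succ)) k.castSucc) hAE.eq

end IsWeightBasis

/-- The quadratic invariant of the binary quartic `∑ (4 choose k) xₖ x⁴⁻ᵏ yᵏ`. -/
def quarticI (K : Type*) [CommRing K] : MvPolynomial (Fin 5) K :=
  X 0 * X 4 - 4 * (X 1 * X 3) + 3 * X 2 ^ 2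

/-- The cubic invariant of the binary quartic `∑ (4 choose k) xₖ x⁴⁻ᵏ yᵏ`, the determinant of the
Hankel matrix `(xᵢ₊ⱼ)` with `i, j ≤ 2`. -/
def quarticJ (K : Type*) [CommRing K] : MvPolynomial (Fin 5) K :=
  X 0 * X 2 * X 4 + 2 * (X 1 * X 2 * X 3) - X 2 ^ 3 - X 0 * X 3 ^ 2 - X 1 ^ 2 * X 4

theorem derivation_quarticI {K : Type*} [CommRing K]
    (D : Derivation K (MvPolynomial (Fin 5) K) (MvPolynomial (Fin 5) K)) :
    D (quarticI K) = X 4 * D (X 0) + X 0 * D (X 4) - 4 * (X 3 * D (X 1) + X 1 * D (X 3)) +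
      6 * (X 2 * D (X 2)) := by
  have h3 : D 3 = 0 := D.map_natCast 3
  have h4 : D 4 = 0 := D.map_natCast 4
  simp only [quarticI, map_add, map_sub, Derivation.leibniz, Derivation.leibniz_pow, h3, h4,
    smul_eq_mul, nsmul_eq_mul]
  push_cast
  ring

theorem derivation_quarticJ {K : Type*} [CommRing K]
    (D : Derivation K (MvPolynomial (Fin 5) K) (MvPolynomial (Fin 5) K)) :
    D (quarticJ K) = (X 2 * X 4 - X 3 ^ 2) * D (X 0) + 2 * (X 2 * X 3 - X 1 * X 4) * D (X 1) +
      (X 0 * X 4 + 2 * X 1 * X 3 - 3 * X 2 ^ 2) * D (X 2) +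
      2 * (X 1 * X 2 - X 0 * X 3) * D (X 3) + (X 0 * X 2 - X 1 ^ 2) * D (X 4) := by
  have h2 : D 2 = 0 := D.map_natCast 2
  simp only [quarticJ, map_add, map_sub, Derivation.leibniz, Derivation.leibniz_pow, h2,
    smul_eq_mul, nsmul_eq_mul]
  push_cast
  ring

variable {b : Module.Basis (Fin 5) K V}

theorem E_mem_polyStabilizer (hb : IsWeightBasis (n := 4) E F b) :
    E ∈ polyStabilizer b {quarticI K, quarticJ K} := by
  have h0 : linearVectorField b E (X 0) = 4 * X 1 := by
    simpa using hb.linearVectorField_E_X_castSucc 0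
  have h1 : linearVectorField b E (X 1) = (4 - 1) * X 2 := by
    simpa using hb.linearVectorField_E_X_castSucc 1
  have h2 : linearVectorField b E (X 2) = (4 - 2) * X 3 := by
    simpa using hb.linearVectorField_E_X_castSucc 2
  have h3 : linearVectorField b E (X 3) = (4 - 3) * X 4 := by
    simpa using hb.linearVectorField_E_X_castSucc 3
  have h4 : linearVectorField b E (X 4) = 0 := hb.linearVectorField_E_X_last
  rw [mem_polyStabilizer]
  rintro p (rfl | rfl)
  · rw [derivation_quarticI, h0, h1, h2, h3, h4]
    ring
  · rw [derivation_quarticJ, h0, h1, h2, h3, h4]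
    ring

theorem F_mem_polyStabilizer (hb : IsWeightBasis (n := 4) E F b) :
    F ∈ polyStabilizer b {quarticI K, quarticJ K} := by
  have h0 : linearVectorField b F (X 0) = 0 := hb.linearVectorField_F_X_zero
  have h1 : linearVectorField b F (X 1) = X 0 := by
    simpa using hb.linearVectorField_F_X_succ 0
  have h2 : linearVectorField b F (X 2) = (1 + 1) * X 1 := by
    simpa using hb.linearVectorField_F_X_succ 1
  have h3 : linearVectorField b F (X 3) = (2 + 1) * X 2 := by
    simpa using hb.linearVectorField_F_X_succ 2
  have h4 : linearVectorField b F (X 4) = (3 + 1) * X 3 := by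
    simpa using hb.linearVectorField_F_X_succ 3
  rw [mem_polyStabilizer]
  rintro p (rfl | rfl)
  · rw [derivation_quarticI, h0, h1, h2, h3, h4]
    ring
  · rw [derivation_quarticJ, h0, h1, h2, h3, h4]
    ring

theorem quarticI_polarized (hA : A ∈ polyStabilizer b {quarticI K, quarticJ K}) (v : V) :
    b.repr v 4 * b.repr (A v) 0 + b.repr v 0 * b.repr (A v) 4 -
      4 * (b.repr v 3 * b.repr (A v) 1 + b.repr v 1 * b.repr (A v) 3) +
      6 * (b.repr v 2 * b.repr (A v) 2) = 0 := by
  have := congr_arg (eval (b.repr v)) (hA _ (Set.mem_insert ..))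
  simpa [derivation_quarticI, eval_linearVectorField_X] using this

theorem quarticJ_polarized (hA : A ∈ polyStabilizer b {quarticI K, quarticJ K}) (v : V) :
    (b.repr v 2 * b.repr v 4 - b.repr v 3 ^ 2) * b.repr (A v) 0 +
      2 * (b.repr v 2 * b.repr v 3 - b.repr v 1 * b.repr v 4) * b.repr (A v) 1 +
      (b.repr v 0 * b.repr v 4 + 2 * b.repr v 1 * b.repr v 3 - 3 * b.repr v 2 ^ 2) *
        b.repr (A v) 2 +
      2 * (b.repr v 1 * b.repr v 2 - b.repr v 0 * b.repr v 3) * b.repr (A v) 3 +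
      (b.repr v 0 * b.repr v 2 - b.repr v 1 ^ 2) * b.repr (A v) 4 = 0 := by
  have := congr_arg (eval (b.repr v)) (hA _ (Set.mem_insert_of_mem _ (Set.mem_singleton _)))
  simpa [derivation_quarticJ, eval_linearVectorField_X] using this

theorem apply_last_eq_smul_of_commute [CharZero K] (hb : IsWeightBasis (n := 4) E F b)
    (hA : A ∈ polyStabilizer b {quarticI K, quarticJ K}) (hAE : Commute A E) :
    A (b 4) = b.repr (A (b 4)) 3 • b 3 := by
  have h₂₃ : (4 - 2 : K) * b.repr (A (b 2)) 2 = (4 - 2) * b.repr (A (b 3)) 3 :=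
    hb.repr_apply_castSucc_of_commute hAE 2 2
  have h₃₄ (k : Fin 4) : (4 - 3 : K) * b.repr (A (b 3)) k.castSucc =
      (4 - (k : ℕ)) * b.repr (A (b 4)) k.succ :=
    hb.repr_apply_castSucc_of_commute hAE 3 k
  have h0 : b.repr (A (b 4)) 0 = 0 := by simpa using quarticI_polarized hA (b 4)
  have h1 : b.repr (A (b 4)) 1 = 0 := by
    have hJ : b.repr (A (b 3)) 0 = 0 := by simpa using quarticJ_polarized hA (b 3)
    simpa [hJ] using h₃₄ 0
  have h2 : b.repr (A (b 4)) 2 = 0 := by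
    have hI : b.repr (A (b 3)) 1 = 0 := by simpa using quarticI_polarized hA (b 3)
    have h : (4 - 3 : K) * b.repr (A (b 3)) 1 = (4 - (1 : ℕ)) * b.repr (A (b 4)) 2 := h₃₄ 1
    grind
  have h4 : b.repr (A (b 4)) 4 = 0 := by
    have hI : b.repr (A (b 2)) 2 = 0 := by simpa using quarticI_polarized hA (b 2)
    have h : (4 - 3 : K) * b.repr (A (b 3)) 3 = (4 - (3 : ℕ)) * b.repr (A (b 4)) 4 := h₃₄ 3
    grind
  conv_lhs => rw [← b.sum_repr (A (b 4)), Fin.sum_univ_five, h0, h1, h2, h4]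
  module

theorem mem_span_E_of_commute [CharZero K] (hb : IsWeightBasis (n := 4) E F b)
    (hA : A ∈ polyStabilizer b {quarticI K, quarticJ K}) (hAE : Commute A E) :
    A ∈ Submodule.span K {E} := by
  set c := b.repr (A (b 4)) 3
  have hE : E (b 4) = (4 - 3 : K) • b 3 := hb.E_succ 3
  have hcomm : Commute (A - c • E) E := hAE.sub_left ((Commute.refl E).smul_left c)
  have hlast : (A - c • E) (b 4) = 0 := by
    rw [LinearMap.sub_apply, LinearMap.smul_apply, hE, apply_last_eq_smul_of_commute hb hA hAE]
    module
  exact Submodule.mem_span_singleton.2 ⟨c, (sub_eq_zero.1 (hb.eq_zero_of_commute hcomm hlast)).symm⟩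

theorem polyStabilizer_quartic_le_span [CharZero K] (hb : IsWeightBasis (n := 4) E F b)
    (t : IsSl2Triple H E F) :
    (polyStabilizer b {quarticI K, quarticJ K}).toSubmodule ≤ Submodule.span K {H, E, F} := by
  have : FiniteDimensional K V := b.finiteDimensional_of_finite
  have hE := E_mem_polyStabilizer hb
  have hF := F_mem_polyStabilizer hb
  have hH : H ∈ polyStabilizer b {quarticI K, quarticJ K} :=
    t.lie_e_f ▸ LieSubalgebra.lie_mem _ hE hF
  refine le_span_of_centralizer_le t (LieModule.traceForm_lieInvariant K (Module.End K V) V)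
    ?_ ?_ hH hF (fun x hx ↦ LieSubalgebra.lie_mem _ hE hx) fun x hx hEx ↦ ?_
  · exact hb.trace_F_mul_E_ne_zero
  · exact LieAlgebra.ad_nilpotent_of_nilpotent hb.isNilpotent_E
  · exact mem_span_E_of_commute hb hx (commute_iff_lie_eq.2 hEx).symm

end BinaryQuartic

section ExpFlow

open NormedSpace

variable {𝕜 V : Type*} [RCLike 𝕜] [NormedAddCommGroup V] [NormedSpace 𝕜 V] [CompleteSpace V]

theorem eq_exp_smul_apply_of_hasDerivAt {A : V →L[𝕜] V} {u : 𝕜 → V}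
    (hu : ∀ t, HasDerivAt u (A (u t)) t) (t : 𝕜) : u t = exp (t • A) (u 0) := by
  let : NormedAlgebra ℚ (V →L[𝕜] V) := NormedAlgebra.restrictScalars ℚ 𝕜 _
  have hderiv (s : 𝕜) : HasDerivAt (fun s ↦ exp (s • -A) (u s)) 0 s :=
    ((hasDerivAt_exp_smul_const (-A) s).clm_apply (hu s)).congr_deriv (by simp)
  have hconst : exp (t • -A) (u t) = u 0 := by
    simpa using is_const_of_deriv_eq_zero (fun s ↦ (hderiv s).differentiableAt)
      (fun s ↦ (hderiv s).deriv) t 0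
  have hcomm : Commute (t • A) (t • -A) := ((Commute.refl A).neg_right.smul_left t).smul_right t
  rw [← hconst, ← mul_apply_eq_comp, ← exp_add_of_commute hcomm, smul_neg, add_neg_cancel,
    exp_zero, one_apply_eq_self]

theorem exp_apply_mem {A : V →L[𝕜] V} {W : Submodule 𝕜 V} (hW : IsClosed (W : Set V))
    (hA : ∀ w ∈ W, A w ∈ W) {w : V} (hw : w ∈ W) : exp A w ∈ W := by
  let : NormedAlgebra ℚ (V →L[𝕜] V) := NormedAlgebra.restrictScalars ℚ 𝕜 _
  have hpow (n : ℕ) : (A ^ n) w ∈ W := by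
    induction n with
    | zero => exact hw
    | succ n ih => rw [pow_succ']; exact hA _ ih
  have hsum : HasSum (fun n : ℕ ↦ ((n.factorial : 𝕜)⁻¹ • A ^ n) w) (exp A w) :=
    (exp_series_hasSum_exp' (𝕂 := 𝕜) A).mapL (ContinuousLinearMap.apply 𝕜 V w)
  exact hW.mem_of_tendsto hsum (.of_forall fun s ↦ sum_mem fun n _ ↦ W.smul_mem _ (hpow n))

end ExpFlow

section SpecialLinear

open Matrix (single)
open Matrix.SpecialLinearGroup
open scoped MatrixGroups Matrix.Norms.Operator

local notation "M₂" => Matrix (Fin 2) (Fin 2) ℂ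

theorem hasDerivAt_coe_transvection {i j : Fin 2} (hij : i ≠ j) (a t : ℂ) :
    HasDerivAt (fun s ↦ (transvection hij (s * a) : M₂)) (single i j a) t := by
  have h := ((hasDerivAt_id t).smul_const (single i j a)).const_add (1 : M₂)
  refine (h.congr_deriv (one_smul ..)).congr_of_eventuallyEq (.of_forall fun s ↦ ?_)
  simp [transvection_coe, Matrix.smul_single]

theorem hasDerivAt_coe_diag2_exp (a : ℂ) :
    HasDerivAt (fun s ↦ (diag2 (Complex.exp (s * a)) (Complex.exp_ne_zero _) : M₂))
      !![a, 0; 0, -a] 0 := by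
  have hexp (c : ℂ) : HasDerivAt (fun s ↦ Complex.exp (s * c)) c 0 := by
    simpa using ((hasDerivAt_id (0 : ℂ)).mul_const c).cexp
  have h := ((hexp a).smul_const (single (0 : Fin 2) (0 : Fin 2) (1 : ℂ))).add
    ((hexp (-a)).smul_const (single (1 : Fin 2) (1 : Fin 2) (1 : ℂ)))
  refine (h.congr_deriv ?_).congr_of_eventuallyEq (.of_forall fun s ↦ ?_)
  · ext i j
    fin_cases i <;> fin_cases j <;> simp
  · ext i j
    fin_cases i <;> fin_cases j <;> simp [diag2_coe', Complex.exp_neg]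

theorem hasDerivAt_transvection_conj {i j : Fin 2} (hij : i ≠ j) (X : M₂) :
    HasDerivAt (fun s : ℂ ↦ (transvection hij s : M₂) * X * (transvection hij (-s) : M₂))
      (single i j 1 * X - X * single i j 1) 0 := by
  have hpos : HasDerivAt (fun s : ℂ ↦ (transvection hij s : M₂)) (single i j 1) 0 := by
    simpa using hasDerivAt_coe_transvection hij 1 0
  have hneg : HasDerivAt (fun s : ℂ ↦ (transvection hij (-s) : M₂)) (single i j (-1)) 0 := by
    simpa using hasDerivAt_coe_transvection hij (-1) 0
  refine ((hpos.mul_const X).mul hneg).congr_deriv ?_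
  have h : single i j (-1 : ℂ) = -single i j 1 := (map_neg (Matrix.singleAddMonoidHom i j) 1)
  simp [h, sub_eq_add_neg]

attribute [local instance] LieRing.ofAssociativeRing in
theorem isSl2Triple_single :
    IsSl2Triple (single 0 0 1 - single 1 1 1 : M₂) (single 0 1 1) (single 1 0 1) := by
  refine ⟨fun h ↦ by simpa using congr_fun₂ h 0 0, ?_, ?_, ?_⟩
  · simp [Ring.lie_def]
  · simp [Ring.lie_def, sub_mul, mul_sub, two_smul]
  · simp [Ring.lie_def, sub_mul, mul_sub, two_smul, neg_sub_left]

theorem exists_hasDerivAt_of_trace_eq_zero {X : M₂} (hX : X.trace = 0) :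
    ∃ γ : ℂ → SL(2, ℂ), γ 0 = 1 ∧ HasDerivAt (fun s ↦ (γ s : M₂)) X 0 := by
  have hdiag : diag2 (Complex.exp (0 * X 0 0)) (Complex.exp_ne_zero _) = 1 := by
    ext i j
    fin_cases i <;> fin_cases j <;> simp [diag2_coe']
  refine ⟨fun s ↦ transvection zero_ne_one (s * X 0 1) * transvection one_ne_zero (s * X 1 0) *
    diag2 (Complex.exp (s * X 0 0)) (Complex.exp_ne_zero _), ?_, ?_⟩
  · simp only [zero_mul, transvection_coeff_zero, one_mul]
    simpa using hdiag
  · have h := ((hasDerivAt_coe_transvection zero_ne_one (X 0 1) 0).mul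
      (hasDerivAt_coe_transvection one_ne_zero (X 1 0) 0)).mul (hasDerivAt_coe_diag2_exp (X 0 0))
    refine h.congr_deriv ?_
    have hX : X 1 1 = -X 0 0 := by
      rwa [Matrix.trace_fin_two, add_comm, add_eq_zero_iff_eq_neg] at hX
    rw [hdiag]
    simp only [zero_mul, transvection_coeff_zero, coe_one, one_mul, mul_one, Pi.mul_apply]
    ext i j
    fin_cases i <;> fin_cases j <;> simp [hX]

theorem IsPolynomialRep.exists_differentiable_extension {V : Type} [NormedAddCommGroup V]
    [NormedSpace ℂ V] [FiniteDimensional ℂ V] {ρ : SL(2, ℂ) →* (V ≃ₗ[ℂ] V)}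
    (hρ : IsPolynomialRep ρ) : ∃ R : M₂ → V →L[ℂ] V,
      Differentiable ℂ R ∧ ∀ (g : SL(2, ℂ)) (v : V), R g v = ρ g v := by
  let b := Module.finBasis ℂ V
  choose p hp using fun i j ↦ hρ (b.coord i) (b j)
  have hdiff (q : MvPolynomial (Fin 2 × Fin 2) ℂ) :
      Differentiable ℂ fun g : M₂ ↦ q.eval fun k ↦ g k.1 k.2 := fun g ↦ by
    refine (AnalyticAt.aeval_mvPolynomial (fun k ↦ ?_) q).differentiableAt
    exact (Matrix.entryLinearMap ℂ ℂ k.1 k.2).toContinuousLinearMap.analyticAt g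
  refine ⟨fun g ↦ ∑ i, ∑ j, (p i j).eval (fun k ↦ g k.1 k.2) •
    (b.coord j).toContinuousLinearMap.smulRight (b i), ?_, fun g v ↦ ?_⟩
  · exact .fun_sum fun i _ ↦ .fun_sum fun j _ ↦ (hdiff _).smul_const _
  · have hv (i) : b.repr (ρ g v) i = ∑ j, b.repr v j * b.repr (ρ g (b j)) i := by
      conv_lhs => rw [← b.sum_repr v, map_sum, map_sum]
      simp
    rw [← b.sum_repr (ρ g v)]
    simp [← hp, hv, -Module.Basis.sum_repr, Finset.sum_smul, smul_smul, mul_comm]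

variable {V : Type} [NormedAddCommGroup V] [NormedSpace ℂ V] {ρ : SL(2, ℂ) →* (V ≃ₗ[ℂ] V)}
  {D : M₂ →ₗ[ℂ] Module.End ℂ V}

/-- `D` extends the differential at the identity of the representation `ρ` of `SL₂(ℂ)`, which is
defined on the matrices of trace zero. -/
def IsDifferential (ρ : SL(2, ℂ) →* (V ≃ₗ[ℂ] V)) (D : M₂ →ₗ[ℂ] Module.End ℂ V) : Prop :=
  ∀ (γ : ℂ → SL(2, ℂ)) (X : M₂), γ 0 = 1 → HasDerivAt (fun s ↦ (γ s : M₂)) X 0 →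
    ∀ v, HasDerivAt (fun s ↦ ρ (γ s) v) (D X v) 0

theorem IsPolynomialRep.exists_isDifferential [FiniteDimensional ℂ V] (hρ : IsPolynomialRep ρ) :
    ∃ D, IsDifferential ρ D := by
  obtain ⟨R, hR, hRρ⟩ := hρ.exists_differentiable_extension
  refine ⟨ContinuousLinearMap.coeLM ℂ ∘ₗ (fderiv ℂ R 1).toLinearMap, fun γ X hγ0 hγ v ↦ ?_⟩
  have hRγ : HasDerivAt (fun s ↦ R (γ s)) (fderiv ℂ R 1 X) 0 :=
    (hR 1).hasFDerivAt.comp_hasDerivAt_of_eq (0 : ℂ) hγ (by rw [hγ0, coe_one])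
  have hRγv : HasDerivAt (fun s ↦ R (γ s) v) (fderiv ℂ R 1 X v) 0 :=
    (ContinuousLinearMap.apply ℂ V v).hasFDerivAt.comp_hasDerivAt (0 : ℂ) hRγ
  simp only [hRρ] at hRγv
  exact hRγv

namespace IsDifferential

theorem conj [FiniteDimensional ℂ V] (hD : IsDifferential ρ D) (g : SL(2, ℂ)) {X : M₂}
    (hX : X.trace = 0) (v : V) : D (g * X * (g⁻¹ : SL(2, ℂ))) (ρ g v) = ρ g (D X v) := by
  obtain ⟨γ, hγ0, hγ⟩ := exists_hasDerivAt_of_trace_eq_zero hX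
  have hleft := hD (fun s ↦ g * γ s * g⁻¹) (g * X * (g⁻¹ : SL(2, ℂ))) (by simp [hγ0])
    ((hγ.const_mul _).mul_const _) (ρ g v)
  have hright := (ρ g : V →ₗ[ℂ] V).toContinuousLinearMap.hasFDerivAt.comp_hasDerivAt (0 : ℂ)
    (hD γ X hγ0 hγ v)
  refine hleft.unique (hright.congr_of_eventuallyEq (.of_forall fun s ↦ ?_))
  simp [map_mul]

theorem hasDerivAt_transvection (hD : IsDifferential ρ D) {i j : Fin 2} (hij : i ≠ j) (v : V)
    (t : ℂ) : HasDerivAt (fun s ↦ ρ (transvection hij s) v)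
      (D (single i j 1) (ρ (transvection hij t) v)) t := by
  have h := hD (fun s ↦ transvection hij s) (single i j 1) (transvection_coeff_zero hij)
    (by simpa using hasDerivAt_coe_transvection hij 1 0) (ρ (transvection hij t) v)
  rw [← sub_self t] at h
  refine (h.comp_sub_const t t).congr_of_eventuallyEq (.of_forall fun s ↦ ?_)
  dsimp only
  rw [← LinearEquiv.mul_apply, ← map_mul, ← transvection_add, sub_add_cancel]

theorem map_mem [FiniteDimensional ℂ V] (hD : IsDifferential ρ D) {W : Submodule ℂ V}
    (hW : ∀ i j : Fin 2, i ≠ j → W ≤ W.comap (D (single i j 1))) (g : SL(2, ℂ)) {w : V}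
    (hw : w ∈ W) : ρ g w ∈ W := by
  have : CompleteSpace V := FiniteDimensional.complete ℂ V
  induction g using Matrix.SL2.transvection_induction generalizing w with
  | htransvec i j hij c =>
    rw [eq_exp_smul_apply_of_hasDerivAt (A := Module.End.toContinuousLinearMap V (D (single i j 1)))
      (hD.hasDerivAt_transvection hij w) c]
    refine exp_apply_mem W.closed_of_finiteDimensional
      (fun x hx ↦ W.smul_mem c (hW i j hij hx)) ?_
    simpa using hw
  | hmul A B hA hB =>
    rw [map_mul]
    exact hA (hB hw)

theorem eval_repr_map {ι : Type*} [Fintype ι] [DecidableEq ι] (hD : IsDifferential ρ D)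
    (b : Module.Basis ι ℂ V) {p : MvPolynomial ι ℂ}
    (hp : ∀ i j : Fin 2, i ≠ j → linearVectorField b (D (single i j 1)) p = 0) (g : SL(2, ℂ))
    (v : V) : p.eval (b.repr (ρ g v)) = p.eval (b.repr v) := by
  induction g using Matrix.SL2.transvection_induction generalizing v with
  | htransvec i j hij c =>
    have hderiv (t : ℂ) := hasDerivAt_eval_repr b (hD.hasDerivAt_transvection hij v t) p
    simp only [hp i j hij, map_zero] at hderiv
    simpa using is_const_of_deriv_eq_zero (fun t ↦ (hderiv t).differentiableAt)
      (fun t ↦ (hderiv t).deriv) c 0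
  | hmul A B hA hB =>
    rw [map_mul]
    exact (hA _).trans (hB v)

attribute [local instance] LieRing.ofAssociativeRing

variable [FiniteDimensional ℂ V]

theorem map_lie_single (hD : IsDifferential ρ D) {i j : Fin 2} (hij : i ≠ j)
    {X : M₂} (hX : X.trace = 0) : D ⁅(single i j 1 : M₂), X⁆ = ⁅D (single i j 1), D X⁆ := by
  ext v
  have hv : HasDerivAt (fun s ↦ ρ (transvection hij s) v) (D (single i j 1) v) 0 := by
    simpa using hD.hasDerivAt_transvection hij v 0
  have hDX : HasDerivAt (fun s ↦ ρ (transvection hij s) (D X v)) (D (single i j 1) (D X v)) 0 := by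
    simpa using hD.hasDerivAt_transvection hij (D X v) 0
  have hconj := ((LinearMap.toContinuousBilinearMap D).hasFDerivAt.comp_hasDerivAt (0 : ℂ)
    (hasDerivAt_transvection_conj hij X)).clm_apply hv
  have h := hconj.unique (hDX.congr_of_eventuallyEq (.of_forall fun s ↦ by
    simpa [transvection_inv] using hD.conj (transvection hij s) hX v))
  simp only [Function.comp_apply, neg_zero, transvection_coeff_zero, coe_one, one_mul, mul_one,
    map_one, LinearEquiv.coe_one, id_eq] at h
  rw [Ring.lie_def, Ring.lie_def]
  exact eq_sub_of_add_eq h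

theorem eq_bot_or_eq_top (hD : IsDifferential ρ D) (hρ : IsIrreducibleRep ρ) {W : Submodule ℂ V}
    (hE : W ≤ W.comap (D (single 0 1 1))) (hF : W ≤ W.comap (D (single 1 0 1))) :
    W = ⊥ ∨ W = ⊤ :=
  hρ W fun g _ hw ↦ hD.map_mem (by simp [Fin.forall_fin_two, hE, hF]) g hw

theorem exists_ne_zero (hD : IsDifferential ρ D) (hρ : IsIrreducibleRep ρ)
    (hV : 1 < Module.finrank ℂ V) : D (single 0 1 1) ≠ 0 ∨ D (single 1 0 1) ≠ 0 := by
  by_contra! h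
  have : Nontrivial V := Module.nontrivial_of_finrank_pos (R := ℂ) (by lia)
  obtain ⟨v, hv⟩ := exists_ne (0 : V)
  have hline := finrank_span_singleton (K := ℂ) hv
  have hle (A : Module.End ℂ V) (hA : A = 0) : (ℂ ∙ v) ≤ (ℂ ∙ v).comap A := by simp [hA]
  obtain h | h := hD.eq_bot_or_eq_top hρ (hle _ h.1) (hle _ h.2)
  · rw [h, finrank_bot] at hline
    lia
  · rw [h, finrank_top] at hline
    lia

theorem isSl2Triple (hD : IsDifferential ρ D) (hρ : IsIrreducibleRep ρ)
    (hV : 1 < Module.finrank ℂ V) :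
    IsSl2Triple (D (single 0 0 1 - single 1 1 1)) (D (single 0 1 1)) (D (single 1 0 1)) := by
  have t := isSl2Triple_single
  have hEF : ⁅D (single 0 1 1), D (single 1 0 1)⁆ = D (single 0 0 1 - single 1 1 1) := by
    rw [← hD.map_lie_single zero_ne_one (by simp), t.lie_e_f]
  have hHE : ⁅D (single 0 0 1 - single 1 1 1), D (single 0 1 1)⁆ = 2 • D (single 0 1 1) := by
    rw [← lie_skew, ← hD.map_lie_single zero_ne_one (by simp), ← map_neg, lie_skew,
      t.lie_h_e_nsmul, map_nsmul]
  have hHF : ⁅D (single 0 0 1 - single 1 1 1), D (single 1 0 1)⁆ = -(2 • D (single 1 0 1)) := by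
    rw [← lie_skew, ← hD.map_lie_single one_ne_zero (by simp), ← map_neg, lie_skew,
      t.lie_h_f_nsmul, map_neg, map_nsmul]
  refine ⟨fun hH ↦ ?_, hEF, hHE, hHF⟩
  rw [hH, zero_lie, ← Nat.cast_smul_eq_nsmul ℂ, Nat.cast_two] at hHE hHF
  obtain hE | hF := hD.exists_ne_zero hρ hV
  · exact hE ((smul_eq_zero.mp hHE.symm).resolve_left two_ne_zero)
  · exact hF ((smul_eq_zero.mp (zero_eq_neg.mp hHF)).resolve_left two_ne_zero)

end IsDifferential

end SpecialLinear

section LieAlgebraOf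

open Matrix (single)
open scoped MatrixGroups

attribute [local instance] LieRing.ofAssociativeRing

theorem le_primeGroup {V : Type*} [AddCommGroup V] [Module ℂ V] (G : Subgroup (V ≃ₗ[ℂ] V)) :
    G ≤ primeGroup G :=
  fun g hg _ _ hf v ↦ hf g hg v

theorem lieAlgebraOf_mono {G G' : Subgroup ((Fin 5 → ℂ) ≃ₗ[ℂ] (Fin 5 → ℂ))} (h : G ≤ G') :
    lieAlgebraOf G ⊆ lieAlgebraOf G' :=
  fun _ ⟨c, hc0, hc, hA⟩ ↦ ⟨c, hc0, fun s ↦ h (hc s), hA⟩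

variable {ρ : SL(2, ℂ) →* ((Fin 5 → ℂ) ≃ₗ[ℂ] (Fin 5 → ℂ))}

theorem IsDifferential.span_le_lieAlgebraOf_range {D} (hD : IsDifferential ρ D) :
    (Submodule.span ℂ {D (single 0 0 1 - single 1 1 1), D (single 0 1 1), D (single 1 0 1)} :
      Set (Module.End ℂ (Fin 5 → ℂ))) ⊆ lieAlgebraOf ρ.range := by
  intro A hA
  obtain ⟨x, y, z, rfl⟩ := Submodule.mem_span_triple.mp hA
  obtain ⟨γ, hγ0, hγ⟩ := exists_hasDerivAt_of_trace_eq_zero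
    (X := x • (single 0 0 1 - single 1 1 1) + y • single 0 1 1 + z • single 1 0 1) (by simp)
  refine ⟨fun s ↦ ρ (γ s), (congrArg ρ hγ0).trans ρ.map_one, fun s ↦ ⟨γ s, rfl⟩, ?_⟩
  simpa only [map_add, map_smul] using hD γ _ hγ0 hγ

theorem IsDifferential.lieAlgebraOf_primeGroup_range_subset {D} (hD : IsDifferential ρ D)
    (hρ : IsIrreducibleRep ρ) : lieAlgebraOf (primeGroup ρ.range) ⊆
      Submodule.span ℂ {D (single 0 0 1 - single 1 1 1), D (single 0 1 1), D (single 1 0 1)} := by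
  have t := hD.isSl2Triple hρ (by simp)
  obtain ⟨b, hb⟩ := exists_isWeightBasis (n := 4) (by simp) t
    fun W hE hF ↦ hD.eq_bot_or_eq_top hρ hE hF
  refine (lieAlgebraOf_primeGroup_subset b ?_).trans (polyStabilizer_quartic_le_span hb t)
  rintro p hp _ ⟨g, rfl⟩ v
  refine hD.eval_repr_map b ?_ g v
  have hE := (mem_polyStabilizer b).mp (E_mem_polyStabilizer hb) p hp
  have hF := (mem_polyStabilizer b).mp (F_mem_polyStabilizer hb) p hp
  simp [Fin.forall_fin_two, hE, hF]

theorem exists_isSl2Triple_lieAlgebraOf_eq_span (hρpoly : IsPolynomialRep ρ)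
    (hρirr : IsIrreducibleRep ρ) : ∃ H E F : Module.End ℂ (Fin 5 → ℂ), IsSl2Triple H E F ∧
      lieAlgebraOf ρ.range = Submodule.span ℂ {H, E, F} ∧
      lieAlgebraOf (primeGroup ρ.range) = Submodule.span ℂ {H, E, F} := by
  obtain ⟨D, hD⟩ := hρpoly.exists_isDifferential
  have hspan := hD.span_le_lieAlgebraOf_range
  have hprime := hD.lieAlgebraOf_primeGroup_range_subset hρirr
  have hmono := lieAlgebraOf_mono (le_primeGroup ρ.range)
  exact ⟨_, _, _, hD.isSl2Triple hρirr (by simp), (hmono.trans hprime).antisymm hspan,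
    hprime.antisymm (hspan.trans hmono)⟩

end LieAlgebraOf

/-- Let `G = SO₃(ℂ)` act on `V = R₄`, its 5-dimensional irreducible
representation (realized as a polynomial irreducible representation of `SL₂(ℂ)` on
`ℂ⁵`, which factors through `SO₃`).  Then the Lie algebra of `G'` equals the image of
the Lie algebra `so₃ ≅ sl₂` acting on `V` (that is, the Lie algebra of `G`); in
particular the Lie algebra of `G'` is semisimple — it has no nonzero abelian ideals —
and it has trivial center. -/
theorem stmt19
    (ρ : Matrix.SpecialLinearGroup (Fin 2) ℂ →* ((Fin 5 → ℂ) ≃ₗ[ℂ] (Fin 5 → ℂ)))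
    (hρpoly : IsPolynomialRep ρ) (hρirr : IsIrreducibleRep ρ)
    (hcenter : ρ (-1) = 1) :
    lieAlgebraOf (primeGroup ρ.range) = lieAlgebraOf ρ.range ∧
    -- the Lie algebra of `G'` has no nonzero abelian ideals (semisimplicity) …
    (∀ J : Submodule ℂ (Module.End ℂ (Fin 5 → ℂ)),
      (J : Set (Module.End ℂ (Fin 5 → ℂ))) ⊆ lieAlgebraOf (primeGroup ρ.range) →
      (∀ A ∈ lieAlgebraOf (primeGroup ρ.range), ∀ B ∈ J, A * B - B * A ∈ J) →
      (∀ B ∈ J, ∀ B' ∈ J, B * B' - B' * B = 0) → J = ⊥) ∧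
    -- … and trivial center
    (∀ A ∈ lieAlgebraOf (primeGroup ρ.range),
      (∀ B ∈ lieAlgebraOf (primeGroup ρ.range), A * B = B * A) → A = 0) := by
  obtain ⟨H, E, F, t, hG, hG'⟩ := exists_isSl2Triple_lieAlgebraOf_eq_span hρpoly hρirr
  rw [hG, hG']
  let : LieRing (Module.End ℂ (Fin 5 → ℂ)) := LieRing.ofAssociativeRing
  have hE : E ∈ Submodule.span ℂ {H, E, F} := Submodule.subset_span (by simp)
  have hF : F ∈ Submodule.span ℂ {H, E, F} := Submodule.subset_span (by simp)
  refine ⟨rfl, fun J hJ hideal habelian ↦ ?_, fun A hA hcomm ↦ ?_⟩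
  · exact eq_bot_of_isAbelian_of_le_span t hJ (hideal E hE) (hideal F hF) habelian
  · exact eq_zero_of_lie_eq_zero_of_mem_span t hA (sub_eq_zero.mpr (hcomm E hE).symm)
      (sub_eq_zero.mpr (hcomm F hF).symm)

end Stmt19
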